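/- Let N ≥ 1, p, q ≥ 0 with pq > 1, and set r₁* = (N/2)(pq−1)/(p+1), r₂* = (N/2)(pq−1)/(q+1). Let ℓ* ≥ 1 satisfy ℓ* · min{r₁*, r₂*} ≥ 1. Let 0 < T < ∞ and let (u,v) be the minimal solution of the system (S) on ℝ^N × (0,T), and assume limsup_{t→T} ( ‖u(t)‖_{L^∞(ℝ^N)} + ‖v(t)‖_{L^∞(ℝ^N)} ) = ∞. Set ρ(t) = (T−t)^{1/2}. Then for every r₁ ∈ (ℓ* r₁*, ∞] and r₂ ∈ (ℓ* r₂*, ∞] there exists a constant c₂ > 0 such that limsup_{t→T} (T−t)^{(p+1)/(pq−1) − N/(2r₁)} |||u(t)|||_{r₁,ρ(t)} ≥ c₂ and limsup_{t→T} (T−t)^{(q+1)/(pq−1) − N/(2r₂)} |||v(t)|||_{r₂,ρ(t)} ≥ c₂, where 1/∞ is interpreted as 0. -/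

import Mathlib

open MeasureTheory ENNReal Filter

noncomputable section

/-- Euclidean space `ℝ^N`. -/
abbrev Euc (N : ℕ) := EuclideanSpace ℝ (Fin N)

/-- The heat semigroup applied to a (nonnegative) function `φ` on `ℝ^N`, with values in `[0,∞]`:
`[S(t)φ](x) = ∫ (4πt)^{-N/2} exp(-|x-y|²/(4t)) φ(y) dy`. -/
noncomputable def heatS (N : ℕ) (t : ℝ) (φ : Euc N → ℝ) (x : Euc N) : ℝ≥0∞ :=
  ∫⁻ y, ENNReal.ofReal
    ((4 * Real.pi * t) ^ (-(N : ℝ) / 2) * Real.exp (-‖x - y‖ ^ 2 / (4 * t)) * φ y)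

/-- The `L^∞` norm of `S(t)φ` on `ℝ^N`. -/
noncomputable def heatSup (N : ℕ) (t : ℝ) (φ : Euc N → ℝ) : ℝ≥0∞ :=
  essSup (heatS N t φ) volume

/-- The `L^{r,∞}(E)` quasinorm: for `1 < r < ∞` it is
`sup_{λ>0} λ |{x ∈ E : |f x| > λ}|^{1/r}`; for `r = 1` (resp. `r = ∞`)
it is the usual `L¹(E)` (resp. `L^∞(E)`) norm. -/
noncomputable def wnorm (N : ℕ) (r : ℝ≥0∞) (f : Euc N → ℝ) (E : Set (Euc N)) : ℝ≥0∞ :=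
  if r = 1 then ∫⁻ x in E, ENNReal.ofReal |f x|
  else if r = ⊤ then essSup (fun x => ENNReal.ofReal |f x|) (volume.restrict E)
  else ⨆ (l : ℝ) (_ : 0 < l), ENNReal.ofReal l * (volume {x ∈ E | l < |f x|}) ^ (1 / r.toReal)

/-- The uniformly local quasinorm `|||f|||_{r,ρ} = sup_x ‖f‖_{L^{r,∞}(B(x,ρ))}`
(for `r = ∞` it is the `L^∞(ℝ^N)` norm). -/
noncomputable def ulocNorm (N : ℕ) (r : ℝ≥0∞) (ρ : ℝ) (f : Euc N → ℝ) : ℝ≥0∞ :=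
  if r = ⊤ then essSup (fun x => ENNReal.ofReal |f x|) volume
  else ⨆ x : Euc N, wnorm N r f (Metric.ball x ρ)

/-- `u ∈ L^∞(τ, T-τ; L^∞(ℝ^N))` for every `τ ∈ (0, T/2)`. -/
def LocBdd (N : ℕ) (T : ℝ≥0∞) (u : Euc N → ℝ → ℝ) : Prop :=
  ∀ τ : ℝ, 0 < τ → ENNReal.ofReal (2 * τ) < T →
    ∃ M : ℝ, ∀ t : ℝ, τ ≤ t → ENNReal.ofReal (t + τ) ≤ T →
      ∀ᵐ x ∂(volume : Measure (Euc N)), |u x t| ≤ M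

/-- Regularity requirements on a pair `(u,v)`: nonnegativity, joint measurability and
uniform boundedness away from `t = 0` and `t = T`. -/
def PairRegular (N : ℕ) (T : ℝ≥0∞) (u v : Euc N → ℝ → ℝ) : Prop :=
  (∀ x t, 0 ≤ u x t) ∧ (∀ x t, 0 ≤ v x t) ∧
  Measurable (Function.uncurry u) ∧ Measurable (Function.uncurry v) ∧
  LocBdd N T u ∧ LocBdd N T v

/-- The Duhamel identities for the system (S) `∂ₜu = Δu + v^p`, `∂ₜv = Δv + u^q` at time `t`. -/
def DuhamelSys (N : ℕ) (p q : ℝ) (u₀ v₀ : Euc N → ℝ) (u v : Euc N → ℝ → ℝ) (t : ℝ) : Prop :=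
  (∀ᵐ x ∂(volume : Measure (Euc N)), ENNReal.ofReal (u x t) =
      heatS N t u₀ x + ∫⁻ s in Set.Ioo 0 t, heatS N (t - s) (fun y => v y s ^ p) x) ∧
  (∀ᵐ x ∂(volume : Measure (Euc N)), ENNReal.ofReal (v x t) =
      heatS N t v₀ x + ∫⁻ s in Set.Ioo 0 t, heatS N (t - s) (fun y => u y s ^ q) x)

/-- The Duhamel inequalities (`≥`, with finite left-hand side) for the system (S) at time `t`. -/
def DuhamelSuperSys (N : ℕ) (p q : ℝ) (u₀ v₀ : Euc N → ℝ) (u v : Euc N → ℝ → ℝ) (t : ℝ) : Prop :=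
  (∀ᵐ x ∂(volume : Measure (Euc N)),
      heatS N t u₀ x + (∫⁻ s in Set.Ioo 0 t, heatS N (t - s) (fun y => v y s ^ p) x) ≤
        ENNReal.ofReal (u x t)) ∧
  (∀ᵐ x ∂(volume : Measure (Euc N)),
      heatS N t v₀ x + (∫⁻ s in Set.Ioo 0 t, heatS N (t - s) (fun y => u y s ^ q) x) ≤
        ENNReal.ofReal (v x t))

/-- `(u,v)` is a solution of the system (S) on `ℝ^N × (0,T)`. -/
def IsSolSys (N : ℕ) (p q : ℝ) (u₀ v₀ : Euc N → ℝ) (T : ℝ≥0∞) (u v : Euc N → ℝ → ℝ) : Prop :=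
  PairRegular N T u v ∧
  ∀ t : ℝ, 0 < t → ENNReal.ofReal t < T → DuhamelSys N p q u₀ v₀ u v t

/-- `(u,v)` is a supersolution of the system (S) on `ℝ^N × (0,T)`. -/
def IsSuperSys (N : ℕ) (p q : ℝ) (u₀ v₀ : Euc N → ℝ) (T : ℝ≥0∞) (u v : Euc N → ℝ → ℝ) : Prop :=
  PairRegular N T u v ∧
  ∀ t : ℝ, 0 < t → ENNReal.ofReal t < T → DuhamelSuperSys N p q u₀ v₀ u v t

/-- `(u,v)` is the minimal solution of the system (S) on `ℝ^N × (0,T)`. -/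
def IsMinSolSys (N : ℕ) (p q : ℝ) (u₀ v₀ : Euc N → ℝ) (T : ℝ≥0∞)
    (u v : Euc N → ℝ → ℝ) : Prop :=
  IsSolSys N p q u₀ v₀ T u v ∧
  ∀ u' v' : Euc N → ℝ → ℝ, IsSolSys N p q u₀ v₀ T u' v' →
    ∀ t : ℝ, 0 < t → ENNReal.ofReal t < T →
      (∀ᵐ x ∂(volume : Measure (Euc N)), u x t ≤ u' x t) ∧
      (∀ᵐ x ∂(volume : Measure (Euc N)), v x t ≤ v' x t)

/-- Regularity requirements on a scalar function `w`. -/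
def ScalarRegular (N : ℕ) (T : ℝ≥0∞) (w : Euc N → ℝ → ℝ) : Prop :=
  (∀ x t, 0 ≤ w x t) ∧ Measurable (Function.uncurry w) ∧ LocBdd N T w

/-- The Duhamel identity for the scalar problem (E) `∂ₜw = Δw + α w^A + β w^B` at time `t`. -/
def DuhamelScalar (N : ℕ) (α β A B : ℝ) (w₀ : Euc N → ℝ) (w : Euc N → ℝ → ℝ) (t : ℝ) : Prop :=
  ∀ᵐ x ∂(volume : Measure (Euc N)), ENNReal.ofReal (w x t) =
    heatS N t w₀ x +
      ∫⁻ s in Set.Ioo 0 t, heatS N (t - s) (fun y => α * w y s ^ A + β * w y s ^ B) x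

/-- The Duhamel inequality (`≥`, with finite left-hand side) for the scalar problem (E). -/
def DuhamelSuperScalar (N : ℕ) (α β A B : ℝ) (w₀ : Euc N → ℝ) (w : Euc N → ℝ → ℝ)
    (t : ℝ) : Prop :=
  ∀ᵐ x ∂(volume : Measure (Euc N)),
    heatS N t w₀ x +
        (∫⁻ s in Set.Ioo 0 t, heatS N (t - s) (fun y => α * w y s ^ A + β * w y s ^ B) x) ≤
      ENNReal.ofReal (w x t)

/-- `w` is a solution of the scalar problem (E) on `ℝ^N × (0,T)`. -/
def IsSolScalar (N : ℕ) (α β A B : ℝ) (w₀ : Euc N → ℝ) (T : ℝ≥0∞)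
    (w : Euc N → ℝ → ℝ) : Prop :=
  ScalarRegular N T w ∧
  ∀ t : ℝ, 0 < t → ENNReal.ofReal t < T → DuhamelScalar N α β A B w₀ w t

/-- `w` is a supersolution of the scalar problem (E) on `ℝ^N × (0,T)`. -/
def IsSuperScalar (N : ℕ) (α β A B : ℝ) (w₀ : Euc N → ℝ) (T : ℝ≥0∞)
    (w : Euc N → ℝ → ℝ) : Prop :=
  ScalarRegular N T w ∧
  ∀ t : ℝ, 0 < t → ENNReal.ofReal t < T → DuhamelSuperScalar N α β A B w₀ w t

/-- The Duhamel identities for the strongly coupled system (SC)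
`∂ₜu = Δu + u^{p₁} v^{p₂}`, `∂ₜv = Δv + u^{q₁} v^{q₂}` at time `t`. -/
def DuhamelSC (N : ℕ) (p₁ p₂ q₁ q₂ : ℝ) (u₀ v₀ : Euc N → ℝ) (u v : Euc N → ℝ → ℝ)
    (t : ℝ) : Prop :=
  (∀ᵐ x ∂(volume : Measure (Euc N)), ENNReal.ofReal (u x t) =
      heatS N t u₀ x +
        ∫⁻ s in Set.Ioo 0 t, heatS N (t - s) (fun y => u y s ^ p₁ * v y s ^ p₂) x) ∧
  (∀ᵐ x ∂(volume : Measure (Euc N)), ENNReal.ofReal (v x t) =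
      heatS N t v₀ x +
        ∫⁻ s in Set.Ioo 0 t, heatS N (t - s) (fun y => u y s ^ q₁ * v y s ^ q₂) x)

/-- `(u,v)` is a solution of the strongly coupled system (SC) on `ℝ^N × (0,T)`. -/
def IsSolSC (N : ℕ) (p₁ p₂ q₁ q₂ : ℝ) (u₀ v₀ : Euc N → ℝ) (T : ℝ≥0∞)
    (u v : Euc N → ℝ → ℝ) : Prop :=
  PairRegular N T u v ∧
  ∀ t : ℝ, 0 < t → ENNReal.ofReal t < T → DuhamelSC N p₁ p₂ q₁ q₂ u₀ v₀ u v t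

/-!
Write `α = (p + 1) / (pq - 1)` and `β = (q + 1) / (pq - 1)`, so that `pβ = α + 1` and
`qα = β + 1`. Suppose that the first upper limit vanishes. Then the averages of `u(s)` over balls
of radius `√σ`, `σ ≤ T - s`, are `o(σ^{-α})` as `s → T`. By Duhamel's formula the average of
`u(s + σ)` is bounded below by a multiple of `σ` times the `p`-th power of the average of `v(s)`,
so the averages of `v(s)` are `o(σ^{-β})`. Averages control the heat flow, hence `S(σ)u(s)` and
`S(σ)v(s)` are `o(σ^{-α})` and `o(σ^{-β})` uniformly in space.

A smoothing estimate `‖u(t)‖_∞ ≤ (Y / (t - s))^α`, `‖v(t)‖_∞ ≤ (Y / (t - s))^β` with `Y ≥ 1` then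
improves itself to the one with `Y / 2`: apply Duhamel's formula on the last `κ (t - s) / Y` units
of time before `t`, for a small `κ`. Local boundedness provides some finite `Y`, and iterating gives
`Y = 1` for all `t < T` with a fixed `s < T`, which contradicts blow-up at `T`.
-/

open Module (finrank)

section HeatKernel

variable {E : Type*} [NormedAddCommGroup E] [InnerProductSpace ℝ E]

/-- The Gauss–Weierstrass kernel on a finite-dimensional inner product space, with values
in `[0, ∞]`; at `t = 0` it is a junk value. -/
def heatKernel (t : ℝ) (x : E) : ℝ≥0∞ :=
  ENNReal.ofReal
    ((4 * Real.pi * t) ^ (-(finrank ℝ E : ℝ) / 2) * Real.exp (-‖x‖ ^ 2 / (4 * t)))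

lemma heatKernel_zero_right (t : ℝ) :
    heatKernel t (0 : E) = ENNReal.ofReal ((4 * Real.pi * t) ^ (-(finrank ℝ E : ℝ) / 2)) := by
  simp [heatKernel]

lemma norm_sq_div_add_norm_sub_sq_div {s t : ℝ} (hs : 0 < s) (ht : 0 < t) (x y : E) :
    ‖y‖ ^ 2 / t + ‖x - y‖ ^ 2 / s =
      ‖x‖ ^ 2 / (t + s) + ‖y - (t / (t + s)) • x‖ ^ 2 / (t * s / (t + s)) := by
  rw [norm_sub_sq_real, norm_sub_sq_real, norm_smul, inner_smul_right, real_inner_comm x y,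
    Real.norm_of_nonneg (by positivity)]
  field_simp
  ring

lemma heatKernel_mul_heatKernel_sub {s t : ℝ} (hs : 0 < s) (ht : 0 < t) (x y : E) :
    heatKernel t y * heatKernel s (x - y) =
      heatKernel (t + s) x * heatKernel (t * s / (t + s)) (y - (t / (t + s)) • x) := by
  have exponents : -‖y‖ ^ 2 / (4 * t) + -‖x - y‖ ^ 2 / (4 * s) =
      -‖x‖ ^ 2 / (4 * (t + s)) +
        -‖y - (t / (t + s)) • x‖ ^ 2 / (4 * (t * s / (t + s))) := by
    simp only [neg_div, mul_comm (4 : ℝ), ← div_div]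
    linear_combination (-1 / 4 : ℝ) * norm_sq_div_add_norm_sub_sq_div hs ht x y
  have prefactors : (4 * Real.pi * t) * (4 * Real.pi * s) =
      (4 * Real.pi * (t + s)) * (4 * Real.pi * (t * s / (t + s))) := by
    field_simp
  simp only [heatKernel]
  rw [← ENNReal.ofReal_mul (by positivity), ← ENNReal.ofReal_mul (by positivity),
    mul_mul_mul_comm, ← Real.exp_add, ← Real.mul_rpow (by positivity) (by positivity),
    exponents, prefactors, Real.mul_rpow (by positivity) (by positivity), Real.exp_add,
    mul_mul_mul_comm]

lemma heatKernel_le_mul_heatKernel_two_mul {σ : ℝ} (hσ : 0 < σ) {x y : E}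
    (hxy : ‖x - y‖ ^ 2 ≤ σ) :
    heatKernel σ x ≤
      ENNReal.ofReal (2 ^ ((finrank ℝ E : ℝ) / 2) * Real.exp (1 / 4)) * heatKernel (2 * σ) y := by
  have hy : ‖y‖ ^ 2 ≤ 2 * ‖x‖ ^ 2 + 2 * σ := by
    nlinarith [norm_le_norm_add_norm_sub x y, norm_nonneg y, norm_nonneg x,
      sq_nonneg (‖x‖ - ‖x - y‖)]
  have exponents : -‖x‖ ^ 2 / (4 * σ) ≤ 1 / 4 + -‖y‖ ^ 2 / (4 * (2 * σ)) := by
    rw [← sub_nonneg]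
    have : 1 / 4 + -‖y‖ ^ 2 / (4 * (2 * σ)) - -‖x‖ ^ 2 / (4 * σ) =
        (2 * ‖x‖ ^ 2 + 2 * σ - ‖y‖ ^ 2) / (8 * σ) := by
      field_simp
      ring
    rw [this]
    exact div_nonneg (by linarith) (by positivity)
  have prefactors : (4 * Real.pi * σ) ^ (-(finrank ℝ E : ℝ) / 2) =
      2 ^ ((finrank ℝ E : ℝ) / 2) * (4 * Real.pi * (2 * σ)) ^ (-(finrank ℝ E : ℝ) / 2) := by
    rw [mul_left_comm _ (2 : ℝ), Real.mul_rpow two_pos.le (by positivity), ← mul_assoc,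
      ← Real.rpow_add two_pos, neg_div, add_neg_cancel, Real.rpow_zero, one_mul]
  rw [heatKernel, heatKernel, ← ENNReal.ofReal_mul (by positivity), prefactors,
    mul_mul_mul_comm (2 ^ _) (Real.exp _), ← Real.exp_add]
  gcongr

lemma exp_neg_three_mul_heatKernel_zero_le {σ θ : ℝ} (hσ : 0 < σ) (hσθ : σ / 3 ≤ θ)
    (hθσ : θ ≤ σ) {x : E} (hx : ‖x‖ ^ 2 ≤ 4 * σ) :
    ENNReal.ofReal (Real.exp (-3)) * heatKernel σ (0 : E) ≤ heatKernel θ x := by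
  have hθ : 0 < θ := by linarith
  have hdim : -(finrank ℝ E : ℝ) / 2 ≤ 0 := by
    rw [neg_div]
    exact neg_nonpos.2 (by positivity)
  have prefactors : (4 * Real.pi * σ) ^ (-(finrank ℝ E : ℝ) / 2) ≤
      (4 * Real.pi * θ) ^ (-(finrank ℝ E : ℝ) / 2) :=
    Real.rpow_le_rpow_of_nonpos (by positivity) (by gcongr) hdim
  have exponents : -3 ≤ -‖x‖ ^ 2 / (4 * θ) := by
    rw [le_div_iff₀ (by positivity)]
    linarith
  rw [heatKernel_zero_right, ← ENNReal.ofReal_mul (by positivity), heatKernel,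
    mul_comm (Real.exp (-3))]
  gcongr

variable [MeasurableSpace E] [BorelSpace E]

lemma measurable_heatKernel : Measurable fun z : ℝ × E => heatKernel z.1 z.2 := by
  unfold heatKernel
  fun_prop

@[fun_prop]
lemma measurable_heatKernel_right (t : ℝ) : Measurable (heatKernel t : E → ℝ≥0∞) :=
  measurable_heatKernel.comp measurable_prodMk_left

variable [FiniteDimensional ℝ E]

lemma lintegral_exp_neg_mul_norm_sq {b : ℝ} (hb : 0 < b) :
    ∫⁻ x : E, ENNReal.ofReal (Real.exp (-b * ‖x‖ ^ 2)) =
      ENNReal.ofReal ((Real.pi / b) ^ ((finrank ℝ E : ℝ) / 2)) := by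
  have integral_eq := GaussianFourier.integral_rexp_neg_mul_sq_norm (V := E) hb
  have integrable : Integrable fun x : E => Real.exp (-b * ‖x‖ ^ 2) := by
    refine Integrable.of_integral_ne_zero ?_
    rw [integral_eq]
    positivity
  rw [← ofReal_integral_eq_lintegral_ofReal integrable
    (Eventually.of_forall fun _ => (Real.exp_pos _).le), integral_eq]

lemma lintegral_heatKernel {t : ℝ} (ht : 0 < t) : ∫⁻ x : E, heatKernel t x = 1 := by
  have exponent (x : E) : -‖x‖ ^ 2 / (4 * t) = -(1 / (4 * t)) * ‖x‖ ^ 2 := by ring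
  have variance : Real.pi / (1 / (4 * t)) = 4 * Real.pi * t := by field_simp
  simp only [heatKernel, exponent]
  simp_rw [ENNReal.ofReal_mul (show 0 ≤ (4 * Real.pi * t) ^ (-(finrank ℝ E : ℝ) / 2) by positivity)]
  rw [lintegral_const_mul' _ _ ENNReal.ofReal_ne_top,
    lintegral_exp_neg_mul_norm_sq (by positivity), variance,
    ← ENNReal.ofReal_mul (by positivity), ← Real.rpow_add (by positivity), neg_div,
    neg_add_cancel, Real.rpow_zero, ENNReal.ofReal_one]

lemma heatKernel_lconvolution_heatKernel {s t : ℝ} (hs : 0 < s) (ht : 0 < t) :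
    (heatKernel t : E → ℝ≥0∞) ⋆ₗ heatKernel s = heatKernel (t + s) := by
  ext x
  simp only [lconvolution_def, neg_add_eq_sub, heatKernel_mul_heatKernel_sub hs ht]
  rw [lintegral_const_mul _ (by fun_prop),
    lintegral_sub_right_eq_self (heatKernel (t * s / (t + s))) ((t / (t + s)) • x),
    lintegral_heatKernel (by positivity), mul_one]

/-- The heat semigroup acting on functions with values in `[0, ∞]`. -/
def heatFlow (t : ℝ) (g : E → ℝ≥0∞) : E → ℝ≥0∞ :=
  heatKernel t ⋆ₗ g

lemma heatFlow_apply (t : ℝ) (g : E → ℝ≥0∞) (x : E) :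
    heatFlow t g x = ∫⁻ y, heatKernel t (x - y) * g y := by
  rw [heatFlow, lconvolution_comm, lconvolution_def]
  simp only [neg_add_eq_sub, mul_comm]

lemma measurable_heatFlow (t : ℝ) {g : E → ℝ≥0∞} (hg : Measurable g) :
    Measurable (heatFlow t g) :=
  measurable_lconvolution _ (measurable_heatKernel_right t) hg

lemma measurable_heatFlow_prod {g : ℝ → E → ℝ≥0∞} (hg : Measurable (Function.uncurry g))
    {θ : ℝ → ℝ} (hθ : Measurable θ) :
    Measurable fun z : ℝ × E => heatFlow (θ z.1) (g z.1) z.2 := by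
  simp only [heatFlow_apply]
  refine Measurable.lintegral_prod_right
    (f := fun (z : ℝ × E) y => heatKernel (θ z.1) (z.2 - y) * g z.1 y) ?_
  refine (measurable_heatKernel.comp (?_ : Measurable fun a : (ℝ × E) × E =>
    (θ a.1.1, a.1.2 - a.2))).mul
    (hg.comp (?_ : Measurable fun a : (ℝ × E) × E => (a.1.1, a.2))) <;> fun_prop

lemma heatFlow_heatFlow {s t : ℝ} (hs : 0 < s) (ht : 0 < t) {g : E → ℝ≥0∞} (hg : Measurable g) :
    heatFlow t (heatFlow s g) = heatFlow (t + s) g := by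
  simp only [heatFlow]
  rw [lconvolution_assoc (by fun_prop) (by fun_prop) hg, heatKernel_lconvolution_heatKernel hs ht]

lemma heatFlow_congr_ae (t : ℝ) {g h : E → ℝ≥0∞} (hgh : g =ᵐ[volume] h) :
    heatFlow t g = heatFlow t h := by
  ext x
  simp only [heatFlow_apply]
  exact lintegral_congr_ae (hgh.mono fun y hy => by simp only [hy])

lemma heatFlow_add (t : ℝ) {g : E → ℝ≥0∞} (hg : Measurable g) (h : E → ℝ≥0∞) (x : E) :
    heatFlow t (fun y => g y + h y) x = heatFlow t g x + heatFlow t h x := by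
  simp only [heatFlow_apply, mul_add]
  exact lintegral_add_left (by fun_prop) _

lemma heatFlow_le_of_ae_le {t : ℝ} (ht : 0 < t) {g : E → ℝ≥0∞} {M : ℝ≥0∞}
    (hg : ∀ᵐ y, g y ≤ M) (x : E) : heatFlow t g x ≤ M := by
  calc heatFlow t g x ≤ ∫⁻ y, heatKernel t (x - y) * M := by
        rw [heatFlow_apply]
        exact lintegral_mono_ae (hg.mono fun y hy => by gcongr)
    _ = M := by
        rw [lintegral_mul_const _ (by fun_prop), lintegral_sub_left_eq_self (heatKernel t),
          lintegral_heatKernel ht, one_mul]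

lemma heatFlow_lintegral (t : ℝ) {g : ℝ → E → ℝ≥0∞} (hg : Measurable (Function.uncurry g))
    (S : Set ℝ) (x : E) :
    heatFlow t (fun y => ∫⁻ τ in S, g τ y) x = ∫⁻ τ in S, heatFlow t (g τ) x := by
  simp only [heatFlow_apply]
  have hk : Measurable fun a : E × ℝ => heatKernel t (x - a.1) := by fun_prop
  have hg' : Measurable fun a : E × ℝ => g a.2 a.1 := hg.comp measurable_swap
  rw [← lintegral_lintegral_swap (hk.mul hg').aemeasurable]
  refine lintegral_congr fun y => ?_
  have hgy : Measurable fun τ => g τ y := hg.comp measurable_prodMk_right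
  exact (lintegral_const_mul _ hgy).symm

end HeatKernel

section LAverage

variable {α : Type*} [MeasurableSpace α] {μ : Measure α} {s : Set α}

lemma setLAverage_const_mul {c : ℝ≥0∞} (hc : c ≠ ⊤) (f : α → ℝ≥0∞) :
    ⨍⁻ x in s, c * f x ∂μ = c * ⨍⁻ x in s, f x ∂μ := by
  simp only [setLAverage_eq, lintegral_const_mul' _ _ hc, mul_div_assoc]

lemma setLAverage_mono_on (hs : MeasurableSet s) {f g : α → ℝ≥0∞}
    (hfg : ∀ᵐ x ∂μ, x ∈ s → f x ≤ g x) : ⨍⁻ x in s, f x ∂μ ≤ ⨍⁻ x in s, g x ∂μ :=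
  laverage_mono_ae ((ae_restrict_iff' hs).2 hfg)

lemma le_setLAverage_of_ae_le (hs : MeasurableSet s) (hs₀ : μ s ≠ 0) (hs' : μ s ≠ ⊤)
    {f : α → ℝ≥0∞} {a : ℝ≥0∞} (hf : ∀ᵐ x ∂μ, x ∈ s → a ≤ f x) : a ≤ ⨍⁻ x in s, f x ∂μ :=
  (setLAverage_const hs₀ hs' a).ge.trans (setLAverage_mono_on hs hf)

end LAverage

section BallAverages

open scoped NNReal
open Metric (ball)

variable {E : Type*} [NormedAddCommGroup E] [InnerProductSpace ℝ E] [FiniteDimensional ℝ E]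
  [MeasurableSpace E] [BorelSpace E]

lemma volume_ball_sqrt_mul_heatKernel_zero {σ : ℝ} (hσ : 0 < σ) (z : E) :
    volume (ball z √σ) * heatKernel σ (0 : E) = volume (ball (0 : E) 1) * heatKernel 1 (0 : E) := by
  have scale : √σ ^ finrank ℝ E * (4 * Real.pi * σ) ^ (-(finrank ℝ E : ℝ) / 2) =
      (4 * Real.pi * 1) ^ (-(finrank ℝ E : ℝ) / 2) := by
    rw [Real.mul_rpow (by positivity) hσ.le, ← Real.rpow_natCast, Real.sqrt_eq_rpow,
      ← Real.rpow_mul hσ.le, mul_left_comm, ← Real.rpow_add hσ, mul_one,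
      show 1 / 2 * (finrank ℝ E : ℝ) + -(finrank ℝ E : ℝ) / 2 = 0 by ring, Real.rpow_zero, mul_one]
  rw [Measure.addHaar_ball_of_pos _ _ (Real.sqrt_pos.2 hσ), heatKernel_zero_right,
    heatKernel_zero_right, ← scale, ENNReal.ofReal_mul (by positivity)]
  ring

/-- The mean of `g` over the ball of radius `ρ` about `z`; it is `0` when `ρ ≤ 0`. -/
def ballAverage (ρ : ℝ) (g : E → ℝ≥0∞) (z : E) : ℝ≥0∞ :=
  ⨍⁻ y in ball z ρ, g y ∂volume

lemma mul_setLIntegral_ball_le_heatFlow {σ θ : ℝ} (hσ : 0 < σ) (hσθ : σ / 3 ≤ θ) (hθσ : θ ≤ σ)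
    {z x : E} (hx : x ∈ ball z √σ) (g : E → ℝ≥0∞) :
    ENNReal.ofReal (Real.exp (-3)) * heatKernel σ (0 : E) * ∫⁻ y in ball z √σ, g y ≤
      heatFlow θ g x := by
  have kernel_ne_top : ENNReal.ofReal (Real.exp (-3)) * heatKernel σ (0 : E) ≠ ⊤ :=
    ENNReal.mul_ne_top ENNReal.ofReal_ne_top ENNReal.ofReal_ne_top
  have kernel_le : ∀ y ∈ ball z √σ,
      ENNReal.ofReal (Real.exp (-3)) * heatKernel σ (0 : E) ≤ heatKernel θ (x - y) := by
    intro y hy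
    have hxy : ‖x - y‖ ≤ 2 * √σ := by
      rw [← dist_eq_norm]
      linarith [dist_triangle_right x y z, Metric.mem_ball.1 hx, Metric.mem_ball.1 hy]
    refine exp_neg_three_mul_heatKernel_zero_le hσ hσθ hθσ ?_
    calc ‖x - y‖ ^ 2 ≤ (2 * √σ) ^ 2 := by gcongr
      _ = 4 * σ := by rw [mul_pow, Real.sq_sqrt hσ.le]; norm_num
  rw [heatFlow_apply, ← lintegral_const_mul' _ _ kernel_ne_top]
  refine le_trans (setLIntegral_mono' measurableSet_ball fun y hy => ?_)
    (setLIntegral_le_lintegral (ball z √σ) _)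
  gcongr
  exact kernel_le y hy

variable (E) in
lemma exists_mul_ballAverage_le_heatFlow :
    ∃ c : ℝ≥0, c ≠ 0 ∧ ∀ (g : E → ℝ≥0∞) {σ θ : ℝ}, 0 < σ → σ / 3 ≤ θ → θ ≤ σ →
      ∀ {z x : E}, x ∈ ball z √σ → c * ballAverage √σ g z ≤ heatFlow θ g x := by
  set c : ℝ≥0∞ :=
    ENNReal.ofReal (Real.exp (-3)) * (volume (ball (0 : E) 1) * heatKernel 1 (0 : E)) with hc
  have kernel_ne_zero : heatKernel 1 (0 : E) ≠ 0 := by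
    rw [heatKernel_zero_right, ENNReal.ofReal_ne_zero_iff]
    positivity
  have c_ne_zero : c ≠ 0 :=
    mul_ne_zero (ENNReal.ofReal_ne_zero_iff.2 (Real.exp_pos _))
      (mul_ne_zero (Metric.measure_ball_pos _ _ one_pos).ne' kernel_ne_zero)
  have c_ne_top : c ≠ ⊤ :=
    ENNReal.mul_ne_top ENNReal.ofReal_ne_top
      (ENNReal.mul_ne_top measure_ball_lt_top.ne ENNReal.ofReal_ne_top)
  refine ⟨c.toNNReal, ENNReal.toNNReal_ne_zero.2 ⟨c_ne_zero, c_ne_top⟩,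
    fun g σ θ hσ hσθ hθσ z x hx => (Eq.le ?_).trans
      (mul_setLIntegral_ball_le_heatFlow hσ hσθ hθσ hx g)⟩
  rw [ENNReal.coe_toNNReal c_ne_top, hc, ← volume_ball_sqrt_mul_heatKernel_zero hσ z,
    ballAverage, ← measure_mul_setLAverage g measure_ball_lt_top.ne]
  ring

lemma lintegral_mul_ballAverage {f h : E → ℝ≥0∞} (hf : Measurable f) (hh : Measurable h)
    (ρ : ℝ) : ∫⁻ y, f y * ballAverage ρ h y = ∫⁻ z, ballAverage ρ f z * h z := by
  have integrand_measurable :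
      Measurable (Function.uncurry fun y z : E => (ball y ρ).indicator (fun z => f y * h z) z) :=
    ((hf.comp measurable_fst).mul (hh.comp measurable_snd)).indicator
      (measurableSet_lt (measurable_snd.dist measurable_fst) measurable_const)
  have integrand_symm (y z : E) : (ball y ρ).indicator (fun z => f y * h z) z =
      (ball z ρ).indicator (fun y => f y * h z) y := by
    simp only [Set.indicator, Metric.mem_ball, dist_comm z y]
  have swapped : ∫⁻ y, f y * ∫⁻ z in ball y ρ, h z = ∫⁻ z, (∫⁻ y in ball z ρ, f y) * h z :=
    calc ∫⁻ y, f y * ∫⁻ z in ball y ρ, h z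
        = ∫⁻ y, ∫⁻ z, (ball y ρ).indicator (fun z => f y * h z) z := by
          simp only [lintegral_indicator measurableSet_ball, lintegral_const_mul _ hh]
      _ = ∫⁻ z, ∫⁻ y, (ball z ρ).indicator (fun y => f y * h z) y := by
          rw [lintegral_lintegral_swap integrand_measurable.aemeasurable]
          simp only [integrand_symm]
      _ = ∫⁻ z, (∫⁻ y in ball z ρ, f y) * h z := by
          simp only [lintegral_indicator measurableSet_ball, lintegral_mul_const _ hf]
  have ballAverage_eq (g : E → ℝ≥0∞) (z : E) :
      ballAverage ρ g z = (volume (ball (0 : E) ρ))⁻¹ * ∫⁻ y in ball z ρ, g y := by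
    rw [ballAverage, setLAverage_eq, Measure.addHaar_ball_center, ENNReal.div_eq_inv_mul]
  simp only [ballAverage_eq, mul_left_comm (f _), mul_assoc]
  by_cases hρ : 0 < ρ
  · have hvol : (volume (ball (0 : E) ρ))⁻¹ ≠ ⊤ :=
      ENNReal.inv_ne_top.2 (Metric.measure_ball_pos _ _ hρ).ne'
    rw [lintegral_const_mul' _ _ hvol, lintegral_const_mul' _ _ hvol, swapped]
  · simp [Metric.ball_eq_empty.2 (not_lt.1 hρ)]

lemma heatFlow_le_heatFlow_two_mul_ballAverage {σ ρ : ℝ} (hσ : 0 < σ) (hρ : 0 < ρ)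
    (hρσ : ρ ^ 2 ≤ σ) {g : E → ℝ≥0∞} (hg : Measurable g) (x : E) :
    heatFlow σ g x ≤ ENNReal.ofReal (2 ^ ((finrank ℝ E : ℝ) / 2) * Real.exp (1 / 4)) *
      heatFlow (2 * σ) (ballAverage ρ g) x := by
  set C := ENNReal.ofReal (2 ^ ((finrank ℝ E : ℝ) / 2) * Real.exp (1 / 4))
  have kernel_le (y : E) :
      heatKernel σ (x - y) ≤ C * ballAverage ρ (fun z => heatKernel (2 * σ) (x - z)) y := by
    rw [ballAverage, ← setLAverage_const_mul ENNReal.ofReal_ne_top]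
    refine le_setLAverage_of_ae_le measurableSet_ball (Metric.measure_ball_pos _ _ hρ).ne'
      measure_ball_lt_top.ne (ae_of_all _ fun z hz => heatKernel_le_mul_heatKernel_two_mul hσ ?_)
    rw [sub_sub_sub_cancel_left y z x, ← dist_eq_norm]
    exact (pow_le_pow_left₀ dist_nonneg (Metric.mem_ball.1 hz).le 2).trans hρσ
  calc heatFlow σ g x
      ≤ ∫⁻ y, C * (ballAverage ρ (fun z => heatKernel (2 * σ) (x - z)) y * g y) := by
        rw [heatFlow_apply]
        refine lintegral_mono fun y => ?_
        rw [← mul_assoc]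
        gcongr
        exact kernel_le y
    _ = C * heatFlow (2 * σ) (ballAverage ρ g) x := by
        rw [lintegral_const_mul' _ _ ENNReal.ofReal_ne_top,
          ← lintegral_mul_ballAverage (by fun_prop) hg, heatFlow_apply]

lemma heatFlow_le_of_ballAverage_le {σ ρ : ℝ} (hσ : 0 < σ) (hρ : 0 < ρ) (hρσ : ρ ^ 2 ≤ σ)
    {g : E → ℝ≥0∞} (hg : Measurable g) {K : ℝ≥0∞} (hK : ∀ z, ballAverage ρ g z ≤ K) (x : E) :
    heatFlow σ g x ≤ ENNReal.ofReal (2 ^ ((finrank ℝ E : ℝ) / 2) * Real.exp (1 / 4)) * K :=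
  (heatFlow_le_heatFlow_two_mul_ballAverage hσ hρ hρσ hg x).trans <|
    mul_le_mul_right (heatFlow_le_of_ae_le (by positivity) (ae_of_all _ hK) x) _

end BallAverages

section MildSolutions

open scoped NNReal
open Set (Ioo Ioc)
open Metric (ball)

lemma setLIntegral_Ioo_add (F : ℝ → ℝ≥0∞) {s σ : ℝ} (hs : 0 ≤ s) (hσ : 0 ≤ σ) :
    ∫⁻ τ in Ioo 0 (s + σ), F τ = (∫⁻ τ in Ioo 0 s, F τ) + ∫⁻ τ in Ioo 0 σ, F (s + τ) := by
  have split : Ioc 0 s ∪ Ioc s (s + σ) = Ioc 0 (s + σ) :=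
    Set.Ioc_union_Ioc_eq_Ioc hs (by linarith)
  have shift : (s + ·) ⁻¹' Ioc s (s + σ) = Ioc 0 σ := by simp
  simp only [restrict_Ioo_eq_restrict_Ioc]
  rw [← split, lintegral_union measurableSet_Ioc (Set.Ioc_disjoint_Ioc_of_le le_rfl), ← shift,
    (measurePreserving_add_left volume s).setLIntegral_comp_preimage_emb
      (measurableEmbedding_addLeft s)]

variable {E : Type*} [NormedAddCommGroup E] [InnerProductSpace ℝ E] [FiniteDimensional ℝ E]
  [MeasurableSpace E] [BorelSpace E]

/-- `f` is a mild solution of `∂ₜf = Δf + g` on `(0, T)`: Duhamel's formula holds between any two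
times of the open interval. No value at time `0` is prescribed. -/
def IsMildHeatSolution (T : ℝ) (f g : ℝ → E → ℝ≥0∞) : Prop :=
  ∀ s σ : ℝ, 0 < s → 0 < σ → s + σ < T →
    ∀ᵐ x, f (s + σ) x = heatFlow σ (f s) x + ∫⁻ τ in Ioo 0 σ, heatFlow (σ - τ) (g (s + τ)) x

lemma isMildHeatSolution_of_duhamel_zero {T : ℝ} {f₀ : E → ℝ≥0∞} {f g : ℝ → E → ℝ≥0∞}
    (hf₀ : Measurable f₀) (hg : Measurable (Function.uncurry g))
    (duhamel : ∀ t, 0 < t → t < T →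
      ∀ᵐ x, f t x = heatFlow t f₀ x + ∫⁻ τ in Ioo 0 t, heatFlow (t - τ) (g τ) x) :
    IsMildHeatSolution T f g := by
  intro s σ hs hσ hsσ
  have source_measurable :
      Measurable (Function.uncurry fun τ y => heatFlow (s - τ) (g τ) y) :=
    measurable_heatFlow_prod hg (by fun_prop)
  have heatFlow_restart (x : E) : heatFlow σ (f s) x =
      heatFlow (s + σ) f₀ x + ∫⁻ τ in Ioo 0 s, heatFlow (s + σ - τ) (g τ) x := by
    rw [heatFlow_congr_ae σ (duhamel s hs (by linarith)),
      heatFlow_add σ (measurable_heatFlow s hf₀), heatFlow_heatFlow hs hσ hf₀,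
      heatFlow_lintegral σ source_measurable, add_comm σ s]
    congr 1
    refine setLIntegral_congr_fun measurableSet_Ioo fun τ hτ => ?_
    rw [heatFlow_heatFlow (sub_pos.2 hτ.2) hσ hg.of_uncurry_left, add_comm σ,
      sub_add_eq_add_sub]
  filter_upwards [duhamel (s + σ) (by linarith) hsσ] with x hx
  simp only [hx, setLIntegral_Ioo_add _ hs.le hσ.le, heatFlow_restart, add_assoc,
    add_sub_add_left_eq_sub]

variable {T : ℝ} {f g : ℝ → E → ℝ≥0∞}

lemma IsMildHeatSolution.heatFlow_le (hf : IsMildHeatSolution T f g) {s σ : ℝ} (hs : 0 < s)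
    (hσ : 0 < σ) (hsσ : s + σ < T) : ∀ᵐ x, heatFlow σ (f s) x ≤ f (s + σ) x :=
  (hf s σ hs hσ hsσ).mono fun x hx => by rw [hx]; exact le_self_add

lemma IsMildHeatSolution.le_heatFlow_add (hf : IsMildHeatSolution T f g) {s σ : ℝ} (hs : 0 < s)
    (hσ : 0 < σ) (hsσ : s + σ < T) {M : ℝ≥0∞}
    (hM : ∀ τ ∈ Ioo 0 σ, ∀ᵐ x, g (s + τ) x ≤ M) :
    ∀ᵐ x, f (s + σ) x ≤ heatFlow σ (f s) x + M * ENNReal.ofReal σ := by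
  filter_upwards [hf s σ hs hσ hsσ] with x hx
  rw [hx]
  gcongr
  calc ∫⁻ τ in Ioo 0 σ, heatFlow (σ - τ) (g (s + τ)) x
      ≤ ∫⁻ _ in Ioo 0 σ, M :=
        setLIntegral_mono' measurableSet_Ioo fun τ hτ =>
          heatFlow_le_of_ae_le (sub_pos.2 hτ.2) (hM τ hτ) x
    _ = M * ENNReal.ofReal σ := by simp

lemma IsMildHeatSolution.mul_le_of_le_heatFlow (hf : IsMildHeatSolution T f g) {s σ : ℝ}
    (hs : 0 < s) (hσ : 0 < σ) (hsσ : s + σ < T) {S : Set E} {a : ℝ≥0∞}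
    (ha : ∀ τ ∈ Ioo (σ / 3) (2 * σ / 3), ∀ x ∈ S, a ≤ heatFlow (σ - τ) (g (s + τ)) x) :
    ∀ᵐ x, x ∈ S → ENNReal.ofReal (σ / 3) * a ≤ f (s + σ) x := by
  filter_upwards [hf s σ hs hσ hsσ] with x hx hxS
  calc ENNReal.ofReal (σ / 3) * a = ∫⁻ _ in Ioo (σ / 3) (2 * σ / 3), a := by
        rw [setLIntegral_const, Real.volume_Ioo, mul_comm, show 2 * σ / 3 - σ / 3 = σ / 3 by ring]
    _ ≤ ∫⁻ τ in Ioo (σ / 3) (2 * σ / 3), heatFlow (σ - τ) (g (s + τ)) x :=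
        setLIntegral_mono' measurableSet_Ioo fun τ hτ => ha τ hτ x hxS
    _ ≤ ∫⁻ τ in Ioo 0 σ, heatFlow (σ - τ) (g (s + τ)) x :=
        lintegral_mono_set (Set.Ioo_subset_Ioo (by linarith) (by linarith))
    _ ≤ f (s + σ) x := by
        rw [hx]
        exact le_add_self

variable (E) in
lemma exists_mul_ballAverage_rpow_le {p : ℝ} (hp : 0 ≤ p) :
    ∃ c : ℝ≥0, c ≠ 0 ∧ ∀ {T : ℝ} {f g h : ℝ → E → ℝ≥0∞},
      IsMildHeatSolution T f (fun t x => g t x ^ p) → IsMildHeatSolution T g h →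
      ∀ {s σ : ℝ}, 0 < s → 0 < σ → s + σ < T → ∀ z,
        c * (ENNReal.ofReal σ * ballAverage √σ (g s) z ^ p) ≤ ballAverage √σ (f (s + σ)) z := by
  obtain ⟨c, hc, heatFlow_ge⟩ := exists_mul_ballAverage_le_heatFlow E
  refine ⟨3⁻¹ * c * c ^ p, by positivity, fun {T f g h} hf hg {s σ} hs hσ hsσ z => ?_⟩
  have ball_ne_zero : volume (ball z √σ) ≠ 0 :=
    (Metric.measure_ball_pos _ _ (Real.sqrt_pos.2 hσ)).ne'
  set A := ballAverage √σ (g s) z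
  have g_ge : ∀ τ ∈ Ioo (σ / 3) (2 * σ / 3), ∀ᵐ y, y ∈ ball z √σ → c * A ≤ g (s + τ) y := by
    intro τ ⟨hτ₁, hτ₂⟩
    filter_upwards [hg.heatFlow_le hs (by linarith) (by linarith)] with y hy hyz
    exact (heatFlow_ge _ hσ hτ₁.le (by linarith) hyz).trans hy
  have source_ge : ∀ τ ∈ Ioo (σ / 3) (2 * σ / 3), ∀ x ∈ ball z √σ,
      c * (c * A) ^ p ≤ heatFlow (σ - τ) (fun y => g (s + τ) y ^ p) x := by
    intro τ hτ x hx
    refine le_trans ?_ (heatFlow_ge _ hσ (by linarith [hτ.2]) (by linarith [hτ.1]) hx)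
    gcongr
    refine le_setLAverage_of_ae_le measurableSet_ball ball_ne_zero measure_ball_lt_top.ne ?_
    filter_upwards [g_ge τ hτ] with y hy hyz
    gcongr
    exact hy hyz
  calc ((3⁻¹ * c * c ^ p : ℝ≥0) : ℝ≥0∞) * (ENNReal.ofReal σ * A ^ p)
      = ENNReal.ofReal (σ / 3) * (c * (c * A) ^ p) := by
        rw [div_eq_inv_mul, ENNReal.mul_rpow_of_nonneg _ _ hp, ENNReal.ofReal_mul (by positivity),
          ENNReal.ofReal_inv_of_pos three_pos]
        push_cast [ENNReal.coe_rpow_of_nonneg _ hp, ENNReal.ofReal_ofNat]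
        ring
    _ ≤ ballAverage √σ (f (s + σ)) z :=
        le_setLAverage_of_ae_le measurableSet_ball ball_ne_zero measure_ball_lt_top.ne
          (hf.mul_le_of_le_heatFlow hs hσ hsσ source_ge)

end MildSolutions

section Smallness

open scoped Topology

variable {E : Type*} [NormedAddCommGroup E] [InnerProductSpace ℝ E] [FiniteDimensional ℝ E]
  [MeasurableSpace E] [BorelSpace E]

/-- The averages of `f s` over balls of radius `√σ` with `k * σ ≤ T - s` are `o(σ^{-γ})` as
`s → T`, uniformly in the ball. -/
def HasSmallBallAverages (k γ T : ℝ) (f : ℝ → E → ℝ≥0∞) : Prop :=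
  ∀ ε > 0, ∀ᶠ s in 𝓝[<] T, ∀ σ > 0, k * σ ≤ T - s →
    ∀ z, ballAverage √σ (f s) z ≤ ENNReal.ofReal (ε * σ ^ (-γ))

/-- The heat flow of `f s` at times `σ ≤ T - s` is `o(σ^{-γ})` as `s → T`, uniformly in space. -/
def HasSmallHeatFlow (γ T : ℝ) (f : ℝ → E → ℝ≥0∞) : Prop :=
  ∀ ε > 0, ∀ᶠ s in 𝓝[<] T, ∀ σ > 0, σ ≤ T - s →
    ∀ x, heatFlow σ (f s) x ≤ ENNReal.ofReal (ε * σ ^ (-γ))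

variable {α β γ p k l T : ℝ} {f g h : ℝ → E → ℝ≥0∞}

lemma HasSmallBallAverages.mono (hf : HasSmallBallAverages k γ T f) (hkl : k ≤ l) :
    HasSmallBallAverages l γ T f := by
  intro ε hε
  filter_upwards [hf ε hε] with s hs σ hσ hlσ z
  exact hs σ hσ (le_trans (by gcongr) hlσ) z

lemma HasSmallBallAverages.hasSmallHeatFlow (hf : HasSmallBallAverages 2 γ T f)
    (hfm : ∀ t, Measurable (f t)) : HasSmallHeatFlow γ T f := by
  intro ε hε
  obtain ⟨C, hC⟩ : ∃ C, C = 2 ^ ((finrank ℝ E : ℝ) / 2) * Real.exp (1 / 4) := ⟨_, rfl⟩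
  have hC_pos : 0 < C := by rw [hC]; positivity
  filter_upwards [hf (ε / (C * 2 ^ γ)) (by positivity)] with s hs σ hσ hσT x
  have radius_sq_le : √(σ / 2) ^ 2 ≤ σ := by
    rw [Real.sq_sqrt (by positivity)]
    linarith
  refine (heatFlow_le_of_ballAverage_le hσ (Real.sqrt_pos.2 (half_pos hσ)) radius_sq_le (hfm s)
    (hs (σ / 2) (half_pos hσ) (by linarith)) x).trans_eq ?_
  rw [← hC, ← ENNReal.ofReal_mul hC_pos.le, Real.div_rpow hσ.le two_pos.le,
    Real.rpow_neg two_pos.le, div_inv_eq_mul]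
  congr 1
  field_simp

lemma HasSmallBallAverages.of_rpow_source (hp : 0 < p) (hpβ : p * β = α + 1) (hT : 0 < T)
    (hf : IsMildHeatSolution T f (fun t x => g t x ^ p)) (hg : IsMildHeatSolution T g h)
    (hfs : HasSmallBallAverages 1 α T f) : HasSmallBallAverages 2 β T g := by
  intro ε hε
  obtain ⟨c, hc, average_rpow_le⟩ := exists_mul_ballAverage_rpow_le E hp.le
  obtain ⟨a, haT, ha⟩ := mem_nhdsLT_iff_exists_Ioo_subset.1 (hfs (c * ε ^ p) (by positivity))
  filter_upwards [Ioo_mem_nhdsLT (max_lt haT hT)] with s hs σ hσ hσT z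
  have hs₀ : 0 < s := (le_max_right a 0).trans_lt hs.1
  have has : a < s := (le_max_left a 0).trans_lt hs.1
  have f_average_le : ballAverage √σ (f (s + σ)) z ≤ ENNReal.ofReal (c * ε ^ p * σ ^ (-α)) :=
    ha ⟨by linarith, by linarith⟩ σ hσ (by linarith) z
  have bound_eq : ENNReal.ofReal (c * ε ^ p * σ ^ (-α)) =
      c * (ENNReal.ofReal σ * ENNReal.ofReal (ε * σ ^ (-β)) ^ p) := by
    have exponent : -β * p = -α - 1 := by linarith
    rw [ENNReal.ofReal_rpow_of_nonneg (by positivity) hp.le, ← ENNReal.ofReal_mul hσ.le,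
      ← ENNReal.ofReal_coe_nnreal, ← ENNReal.ofReal_mul (by positivity),
      Real.mul_rpow hε.le (by positivity), ← Real.rpow_mul hσ.le, exponent,
      Real.rpow_sub_one hσ.ne']
    congr 1
    field_simp
  have := (average_rpow_le hf hg hs₀ hσ (by linarith) z).trans (f_average_le.trans_eq bound_eq)
  rwa [ENNReal.mul_le_mul_iff_right (by exact_mod_cast hc) ENNReal.coe_ne_top,
    ENNReal.mul_le_mul_iff_right (by simpa using hσ) ENNReal.ofReal_ne_top,
    ENNReal.rpow_le_rpow_iff hp] at this

end Smallness

section Bootstrap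

open scoped NNReal
open Set (Ioc Icc)

lemma exists_halving_constants {α β p : ℝ} (hpβ : p * β = α + 1) :
    ∃ κ₀ > (0 : ℝ), ∀ κ > 0, κ ≤ κ₀ → ∃ ε > (0 : ℝ), ∀ R > (0 : ℝ),
      ε * (κ / R) ^ (-α) + ((2 * R) ^ β) ^ p * (κ / R) ≤ (R / 2) ^ α := by
  refine ⟨2 ^ (-α) / 2 / 2 ^ (p * β), by positivity, fun κ hκ hκ₀ =>
    ⟨2 ^ (-α) / 2 * κ ^ α, by positivity, fun R hR => ?_⟩⟩
  rw [le_div_iff₀ (by positivity)] at hκ₀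
  have heat_term : 2 ^ (-α) / 2 * κ ^ α * (κ / R) ^ (-α) = 2 ^ (-α) / 2 * R ^ α := by
    rw [Real.div_rpow hκ.le hR.le, Real.rpow_neg hκ.le, Real.rpow_neg hR.le]
    field_simp
  have source_term : ((2 * R) ^ β) ^ p * (κ / R) = κ * 2 ^ (p * β) * R ^ α := by
    rw [← Real.rpow_mul (by positivity), mul_comm β p, Real.mul_rpow two_pos.le hR.le, hpβ,
      Real.rpow_add_one hR.ne']
    field_simp
  calc 2 ^ (-α) / 2 * κ ^ α * (κ / R) ^ (-α) + ((2 * R) ^ β) ^ p * (κ / R)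
      ≤ 2 ^ (-α) / 2 * R ^ α + 2 ^ (-α) / 2 * R ^ α := by
        rw [heat_term, source_term]
        gcongr
    _ = (R / 2) ^ α := by
        rw [Real.div_rpow hR.le two_pos.le, Real.rpow_neg two_pos.le]
        ring

variable {E : Type*} [MeasureSpace E]

/-- The smoothing estimate `‖f t‖_∞ ≤ (Y / (t - s))^γ` for `s < t ≤ t₁`. -/
def HasSmoothingBound (γ s t₁ : ℝ) (f : ℝ → E → ℝ≥0∞) (Y : ℝ) : Prop :=
  ∀ t ∈ Ioc s t₁, ∀ᵐ x, f t x ≤ ENNReal.ofReal ((Y / (t - s)) ^ γ)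

/-- `f t` is essentially bounded, uniformly for `t` in compact subintervals of `(0, T)`. -/
def IsLocallyEssBounded (T : ℝ) (f : ℝ → E → ℝ≥0∞) : Prop :=
  ∀ s t, 0 < s → t < T → ∃ M : ℝ≥0, ∀ τ ∈ Icc s t, ∀ᵐ x, f τ x ≤ M

variable {α β γ p s t₁ : ℝ} {f g : ℝ → E → ℝ≥0∞}

lemma eventually_hasSmoothingBound_two_pow (hγ : 0 < γ) (hst : s < t₁) {M : ℝ≥0}
    (hM : ∀ t ∈ Ioc s t₁, ∀ᵐ x, f t x ≤ M) :
    ∀ᶠ n : ℕ in atTop, HasSmoothingBound γ s t₁ f (2 ^ n) := by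
  have hst' : 0 < t₁ - s := sub_pos.2 hst
  have bound_tendsto : Tendsto (fun n : ℕ => ((2 : ℝ) ^ n / (t₁ - s)) ^ γ) atTop atTop :=
    (tendsto_rpow_atTop hγ).comp
      ((tendsto_pow_atTop_atTop_of_one_lt (by norm_num)).atTop_div_const hst')
  filter_upwards [bound_tendsto.eventually_ge_atTop (M : ℝ)] with n hn t ht
  filter_upwards [hM t ht] with x hx
  have hts : 0 < t - s := sub_pos.2 ht.1
  refine hx.trans ?_
  rw [← ENNReal.ofReal_coe_nnreal]
  refine ENNReal.ofReal_le_ofReal (hn.trans ?_)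
  gcongr
  exact ht.2

lemma HasSmoothingBound.rpow_le_of_half_le {Y t τ : ℝ} (hg : HasSmoothingBound β s t₁ g Y)
    (hp : 0 ≤ p) (hβ : 0 ≤ β) (hY : 0 ≤ Y) (hts : 0 < t - s) (hτ : (t - s) / 2 ≤ τ - s)
    (hτt₁ : τ ≤ t₁) : ∀ᵐ x, g τ x ^ p ≤ ENNReal.ofReal (((2 * (Y / (t - s))) ^ β) ^ p) := by
  have rate_le : Y / (τ - s) ≤ 2 * (Y / (t - s)) :=
    calc Y / (τ - s) ≤ Y / ((t - s) / 2) := by gcongr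
      _ = 2 * (Y / (t - s)) := by field_simp
  have rate_nonneg : 0 ≤ Y / (τ - s) := div_nonneg hY (by linarith)
  filter_upwards [hg τ ⟨by linarith, hτt₁⟩] with x hx
  rw [← ENNReal.ofReal_rpow_of_nonneg (by positivity) hp]
  exact ENNReal.rpow_le_rpow (hx.trans (by gcongr)) hp

lemma hasSmoothingBound_one_of_halving (hα : 0 < α) (hβ : 0 < β) (hst : s < t₁) {M₁ M₂ : ℝ≥0}
    (hfM : ∀ t ∈ Ioc s t₁, ∀ᵐ x, f t x ≤ M₁) (hgM : ∀ t ∈ Ioc s t₁, ∀ᵐ x, g t x ≤ M₂)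
    (halve_f : ∀ Y ≥ 1, HasSmoothingBound β s t₁ g Y → HasSmoothingBound α s t₁ f (Y / 2))
    (halve_g : ∀ Y ≥ 1, HasSmoothingBound α s t₁ f Y → HasSmoothingBound β s t₁ g (Y / 2)) :
    HasSmoothingBound α s t₁ f 1 ∧ HasSmoothingBound β s t₁ g 1 := by
  obtain ⟨n, hfn, hgn⟩ := ((eventually_hasSmoothingBound_two_pow hα hst hfM).and
    (eventually_hasSmoothingBound_two_pow hβ hst hgM)).exists
  induction n with
  | zero => exact ⟨by simpa using hfn, by simpa using hgn⟩
  | succ n ih =>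
    have two_pow_half : (2 : ℝ) ^ (n + 1) / 2 = 2 ^ n := by rw [pow_succ]; ring
    exact ih (two_pow_half ▸ halve_f _ (one_le_pow₀ one_le_two) hgn)
      (two_pow_half ▸ halve_g _ (one_le_pow₀ one_le_two) hfn)

end Bootstrap

section BoundedNearBlowup

open scoped Topology
open Set (Ioo)

variable {E : Type*} [NormedAddCommGroup E] [InnerProductSpace ℝ E] [FiniteDimensional ℝ E]
  [MeasurableSpace E] [BorelSpace E] {α β p q s t₁ T : ℝ} {f g : ℝ → E → ℝ≥0∞}

-- With `R = Y / (t - s)`, Duhamel's formula is used on the last `κ / R` units of time before `t`,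
-- where `g ≤ (2 * R) ^ β` because `κ / R ≤ (t - s) / 2`.
lemma IsMildHeatSolution.hasSmoothingBound_half
    (hf : IsMildHeatSolution T f (fun t x => g t x ^ p)) (hp : 0 ≤ p) (hβ : 0 ≤ β) (hs : 0 ≤ s)
    (ht₁ : t₁ < T) {κ ε : ℝ} (hκ : 0 < κ) (hκ₂ : κ ≤ 1 / 2) (hε : 0 < ε)
    (halving : ∀ R > 0, ε * (κ / R) ^ (-α) + ((2 * R) ^ β) ^ p * (κ / R) ≤ (R / 2) ^ α)
    (small : ∀ s' ∈ Ioo s T, ∀ σ > 0, σ ≤ T - s' →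
      ∀ x, heatFlow σ (f s') x ≤ ENNReal.ofReal (ε * σ ^ (-α)))
    {Y : ℝ} (hY : 1 ≤ Y) (hg : HasSmoothingBound β s t₁ g Y) :
    HasSmoothingBound α s t₁ f (Y / 2) := by
  intro t ht
  have hts : 0 < t - s := sub_pos.2 ht.1
  set R := Y / (t - s) with hR
  have hR_pos : 0 < R := by positivity
  set σ := κ / R with hσ
  have hσ_pos : 0 < σ := by positivity
  have hσ_le : σ ≤ (t - s) / 2 := by
    rw [hσ, hR, div_div_eq_mul_div, div_le_iff₀ (by positivity)]
    nlinarith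
  have source_le : ∀ τ ∈ Ioo 0 σ,
      ∀ᵐ x, g (t - σ + τ) x ^ p ≤ ENNReal.ofReal (((2 * R) ^ β) ^ p) := fun τ hτ =>
    hg.rpow_le_of_half_le hp hβ (by linarith) hts (by linarith [hτ.1]) (by linarith [hτ.2, ht.2])
  have duhamel :=
    hf.le_heatFlow_add (s := t - σ) (by linarith) hσ_pos (by linarith [ht.2]) source_le
  rw [sub_add_cancel] at duhamel
  filter_upwards [duhamel] with x hx
  have heat_le : heatFlow σ (f (t - σ)) x ≤ ENNReal.ofReal (ε * σ ^ (-α)) :=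
    small (t - σ) ⟨by linarith, by linarith [ht.2]⟩ σ hσ_pos (by linarith [ht.2]) x
  calc f t x ≤ ENNReal.ofReal (ε * σ ^ (-α)) + ENNReal.ofReal (((2 * R) ^ β) ^ p) *
        ENNReal.ofReal σ := hx.trans (by gcongr)
    _ = ENNReal.ofReal (ε * σ ^ (-α) + ((2 * R) ^ β) ^ p * σ) := by
        rw [← ENNReal.ofReal_mul (by positivity),
          ← ENNReal.ofReal_add (by positivity) (by positivity)]
    _ ≤ ENNReal.ofReal ((Y / 2 / (t - s)) ^ α) := by
        rw [div_right_comm]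
        exact ENNReal.ofReal_le_ofReal (halving R hR_pos)

lemma exists_forall_hasSmoothingBound_one (hp : 0 ≤ p) (hq : 0 ≤ q) (hα : 0 < α) (hβ : 0 < β)
    (hpβ : p * β = α + 1) (hqα : q * α = β + 1) (hT : 0 < T)
    (hf : IsMildHeatSolution T f (fun t x => g t x ^ p))
    (hg : IsMildHeatSolution T g (fun t x => f t x ^ q))
    (hfb : IsLocallyEssBounded T f) (hgb : IsLocallyEssBounded T g)
    (hfs : HasSmallHeatFlow α T f) (hgs : HasSmallHeatFlow β T g) :
    ∃ s < T, ∀ t₁ ∈ Ioo s T, HasSmoothingBound α s t₁ f 1 ∧ HasSmoothingBound β s t₁ g 1 := by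
  obtain ⟨κ₁, hκ₁, constants_f⟩ := exists_halving_constants hpβ
  obtain ⟨κ₂, hκ₂, constants_g⟩ := exists_halving_constants hqα
  obtain ⟨κ, hκ, hκ_lt⟩ := exists_between (lt_min one_half_pos (lt_min hκ₁ hκ₂))
  obtain ⟨hκ_half, hκκ₁, hκκ₂⟩ : κ < 1 / 2 ∧ κ < κ₁ ∧ κ < κ₂ := by simpa using hκ_lt
  obtain ⟨ε₁, hε₁, halving_f⟩ := constants_f κ hκ hκκ₁.le
  obtain ⟨ε₂, hε₂, halving_g⟩ := constants_g κ hκ hκκ₂.le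
  obtain ⟨a, haT, small⟩ := mem_nhdsLT_iff_exists_Ioo_subset.1 ((hfs ε₁ hε₁).and (hgs ε₂ hε₂))
  obtain ⟨s, has, hsT⟩ := exists_between (max_lt haT hT)
  obtain ⟨has, hs⟩ := max_lt_iff.1 has
  refine ⟨s, hsT, fun t₁ ht₁ => ?_⟩
  obtain ⟨M₁, hM₁⟩ := hfb s t₁ hs ht₁.2
  obtain ⟨M₂, hM₂⟩ := hgb s t₁ hs ht₁.2
  refine hasSmoothingBound_one_of_halving hα hβ ht₁.1
    (fun t ht => hM₁ t (Set.Ioc_subset_Icc_self ht))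
    (fun t ht => hM₂ t (Set.Ioc_subset_Icc_self ht)) (fun Y hY => ?_) (fun Y hY => ?_)
  · exact hf.hasSmoothingBound_half hp hβ.le hs.le ht₁.2 hκ hκ_half.le hε₁ halving_f
      (fun s' hs' => (small ⟨has.trans hs'.1, hs'.2⟩).1) hY
  · exact hg.hasSmoothingBound_half hq hα.le hs.le ht₁.2 hκ hκ_half.le hε₂ halving_g
      (fun s' hs' => (small ⟨has.trans hs'.1, hs'.2⟩).2) hY

lemma eventually_essSup_le_of_hasSmoothingBound {γ : ℝ} (hγ : 0 ≤ γ) (hsT : s < T)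
    (hf : ∀ t₁ ∈ Ioo s T, HasSmoothingBound γ s t₁ f 1) :
    ∀ᶠ t in 𝓝[<] T, essSup (f t) volume ≤ ENNReal.ofReal ((1 / ((T - s) / 2)) ^ γ) := by
  filter_upwards [Ioo_mem_nhdsLT (show (s + T) / 2 < T by linarith)] with t ht
  have half_le : (T - s) / 2 ≤ t - s := by linarith [ht.1]
  have half_pos : 0 < (T - s) / 2 := by linarith
  refine essSup_le_of_ae_le _ ?_
  filter_upwards [hf t ⟨by linarith, ht.2⟩ t ⟨by linarith, le_rfl⟩] with x hx
  have : 0 < t - s := half_pos.trans_le half_le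
  exact hx.trans (by gcongr)

lemma limsup_essSup_add_essSup_ne_top (hp : 0 ≤ p) (hq : 0 ≤ q) (hα : 0 < α) (hβ : 0 < β)
    (hpβ : p * β = α + 1) (hqα : q * α = β + 1) (hT : 0 < T)
    (hf : IsMildHeatSolution T f (fun t x => g t x ^ p))
    (hg : IsMildHeatSolution T g (fun t x => f t x ^ q))
    (hfb : IsLocallyEssBounded T f) (hgb : IsLocallyEssBounded T g)
    (hfs : HasSmallHeatFlow α T f) (hgs : HasSmallHeatFlow β T g) :
    limsup (fun t => essSup (f t) volume + essSup (g t) volume) (𝓝[<] T) ≠ ⊤ := by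
  obtain ⟨s, hsT, bound⟩ := exists_forall_hasSmoothingBound_one hp hq hα hβ hpβ hqα hT hf hg
    hfb hgb hfs hgs
  have bounded : ∀ᶠ t in 𝓝[<] T, essSup (f t) volume + essSup (g t) volume ≤
      ENNReal.ofReal ((1 / ((T - s) / 2)) ^ α) + ENNReal.ofReal ((1 / ((T - s) / 2)) ^ β) := by
    filter_upwards [
      eventually_essSup_le_of_hasSmoothingBound hα.le hsT fun t₁ ht₁ => (bound t₁ ht₁).1,
      eventually_essSup_le_of_hasSmoothingBound hβ.le hsT fun t₁ ht₁ => (bound t₁ ht₁).2]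
      with t hft hgt using add_le_add hft hgt
  exact ne_top_of_le_ne_top (ENNReal.add_ne_top.2 ⟨ENNReal.ofReal_ne_top, ENNReal.ofReal_ne_top⟩)
    (limsup_le_of_le (h := bounded))

end BoundedNearBlowup

section WeakLebesgue

open Set (Ioc Ioi)

lemma le_ofReal_of_mul_rpow_inv_le {r K l : ℝ} (hr : 0 < r) (hK : 0 ≤ K) (hl : 0 < l) {m : ℝ≥0∞}
    (h : ENNReal.ofReal l * m ^ (1 / r) ≤ ENNReal.ofReal K) :
    m ≤ ENNReal.ofReal (K ^ r * l ^ (-r)) := by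
  have root_le : m ^ (1 / r) ≤ ENNReal.ofReal (K / l) := by
    rw [ENNReal.ofReal_div_of_pos hl, ENNReal.le_div_iff_mul_le (by simp [hl]) (by simp), mul_comm]
    exact h
  calc m = (m ^ (1 / r)) ^ r := by
        rw [← ENNReal.rpow_mul, one_div_mul_cancel hr.ne', ENNReal.rpow_one]
    _ ≤ ENNReal.ofReal (K / l) ^ r := ENNReal.rpow_le_rpow root_le hr.le
    _ = ENNReal.ofReal (K ^ r * l ^ (-r)) := by
        rw [ENNReal.ofReal_rpow_of_nonneg (by positivity) hr.le, Real.div_rpow hK hl.le,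
          Real.rpow_neg hl.le, div_eq_mul_inv]

lemma lintegral_Ioi_ofReal_mul_rpow {r c L : ℝ} (hr : 1 < r) (hc : 0 ≤ c) (hL : 0 < L) :
    ∫⁻ l in Ioi L, ENNReal.ofReal (c * l ^ (-r)) =
      ENNReal.ofReal (c * (L ^ (1 - r) / (r - 1))) := by
  have nonneg : 0 ≤ᵐ[volume.restrict (Ioi L)] fun l => c * l ^ (-r) := by
    filter_upwards [ae_restrict_mem measurableSet_Ioi] with l hl
    have : 0 < l := hL.trans hl
    positivity
  rw [← ofReal_integral_eq_lintegral_ofReal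
    ((integrableOn_Ioi_rpow_of_lt (by linarith) hL).const_mul c) nonneg, integral_const_mul,
    integral_Ioi_rpow_of_lt (by linarith) hL, neg_add_eq_sub, ← neg_sub r 1, neg_div_neg_eq]

variable {X : Type*} [MeasurableSpace X] {μ : Measure X} {s : Set X} {f : X → ℝ} {r K L V : ℝ}

lemma setLIntegral_le_of_measure_lt_le (hf : Measurable f) (hf₀ : ∀ x, 0 ≤ f x) (hr : 1 < r)
    (hK : 0 ≤ K) (hL : 0 < L) (hV : 0 ≤ V) (hs : μ s = ENNReal.ofReal V)
    (decay : ∀ l > 0, μ {x ∈ s | l < f x} ≤ ENNReal.ofReal (K ^ r * l ^ (-r))) :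
    ∫⁻ x in s, ENNReal.ofReal (f x) ∂μ ≤
      ENNReal.ofReal (V * L + K ^ r * (L ^ (1 - r) / (r - 1))) := by
  have : 0 < r - 1 := sub_pos.2 hr
  have low : ∫⁻ l in Ioc 0 L, μ.restrict s {x | l < f x} ≤ ENNReal.ofReal (V * L) :=
    calc ∫⁻ l in Ioc 0 L, μ.restrict s {x | l < f x} ≤ ∫⁻ _ in Ioc 0 L, ENNReal.ofReal V :=
          lintegral_mono fun l =>
            (measure_mono (Set.subset_univ _)).trans (by rw [Measure.restrict_apply_univ, hs])
      _ = ENNReal.ofReal (V * L) := by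
          rw [setLIntegral_const, Real.volume_Ioc, sub_zero, ENNReal.ofReal_mul hV]
  have high : ∫⁻ l in Ioi L, μ.restrict s {x | l < f x} ≤
      ENNReal.ofReal (K ^ r * (L ^ (1 - r) / (r - 1))) := by
    rw [← lintegral_Ioi_ofReal_mul_rpow hr (by positivity) hL]
    refine setLIntegral_mono (by fun_prop) fun l hl => ?_
    rw [Measure.restrict_apply (measurableSet_lt measurable_const hf), Set.inter_comm]
    exact decay l (hL.trans hl)
  rw [lintegral_eq_lintegral_meas_lt _ (ae_of_all _ hf₀) hf.aemeasurable,
    ← Set.Ioc_union_Ioi_eq_Ioi hL.le, ENNReal.ofReal_add (by positivity) (by positivity)]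
  exact (lintegral_union_le _ _ _).trans (add_le_add low high)

-- The layer-cake integral is split at `L = K * V ^ (-1 / r)`, where the two bounds on the
-- distribution function agree.
lemma setLAverage_le_of_weak_type (hf : Measurable f) (hf₀ : ∀ x, 0 ≤ f x) (hr : 1 < r)
    (hK : 0 < K) (hV : 0 < V) (hs : μ s = ENNReal.ofReal V)
    (weak : ∀ l > 0, ENNReal.ofReal l * μ {x ∈ s | l < f x} ^ (1 / r) ≤ ENNReal.ofReal K) :
    ⨍⁻ x in s, ENNReal.ofReal (f x) ∂μ ≤ ENNReal.ofReal (r / (r - 1) * K * V ^ (-r⁻¹)) := by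
  have hr₀ : 0 < r := one_pos.trans hr
  have hr₁ : 0 < r - 1 := sub_pos.2 hr
  have split := setLIntegral_le_of_measure_lt_le hf hf₀ hr hK.le
    (L := K * V ^ (-r⁻¹)) (by positivity) hV.le hs
    fun l hl => le_ofReal_of_mul_rpow_inv_le hr₀ hK.le hl (weak l hl)
  have high_term : K ^ r * (K * V ^ (-r⁻¹)) ^ (1 - r) = K * V ^ (-r⁻¹) * V := by
    have exponent : -r⁻¹ * (1 - r) = -r⁻¹ + 1 := by field_simp; ring
    rw [Real.mul_rpow hK.le (by positivity), ← Real.rpow_mul hV.le, exponent,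
      Real.rpow_add_one hV.ne', ← mul_assoc, ← Real.rpow_add hK, add_sub_cancel, Real.rpow_one,
      mul_assoc]
  rw [setLAverage_eq, hs]
  refine ENNReal.div_le_of_le_mul (split.trans_eq ?_)
  rw [← ENNReal.ofReal_mul (by positivity), ← mul_div_assoc, high_term]
  congr 1
  field_simp
  ring

end WeakLebesgue

section UniformlyLocal

open scoped Topology
open Metric (ball)

variable {N : ℕ} {r : ℝ≥0∞}

lemma wnorm_mono_set (f : Euc N → ℝ) {s t : Set (Euc N)} (hst : s ⊆ t) :
    wnorm N r f s ≤ wnorm N r f t := by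
  unfold wnorm
  split_ifs
  · exact lintegral_mono_set hst
  · exact essSup_mono_measure (Measure.absolutelyContinuous_of_le (Measure.restrict_mono_set _ hst))
  · gcongr

lemma wnorm_ball_le_ulocNorm (f : Euc N → ℝ) {ρ ρ' : ℝ} (hρ : ρ ≤ ρ') (z : Euc N) :
    wnorm N r f (ball z ρ) ≤ ulocNorm N r ρ' f := by
  unfold ulocNorm
  split_ifs with hr
  · simp only [wnorm, hr, top_ne_one, if_false, if_true]
    exact essSup_mono_measure Measure.restrict_le_self.absolutelyContinuous
  · exact (wnorm_mono_set f (Metric.ball_subset_ball hρ)).trans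
      (le_iSup (fun x => wnorm N r f (ball x ρ')) z)

lemma exists_setLAverage_le_of_wnorm_le (hr : 1 ≤ r) :
    ∃ C > (0 : ℝ), ∀ {f : Euc N → ℝ} {s : Set (Euc N)} {K V : ℝ}, Measurable f → 0 < K → 0 < V →
      volume s = ENNReal.ofReal V → wnorm N r f s ≤ ENNReal.ofReal K →
      ⨍⁻ x in s, ENNReal.ofReal |f x| ∂volume ≤ ENNReal.ofReal (C * K * V ^ (-r⁻¹.toReal)) := by
  rcases hr.eq_or_lt with rfl | hr₁
  · refine ⟨1, one_pos, fun {f s K V} _ _ hV hs hK => ?_⟩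
    rw [setLAverage_eq, hs]
    refine ENNReal.div_le_of_le_mul ?_
    rw [← ENNReal.ofReal_mul (by positivity)]
    simpa [wnorm, Real.rpow_neg_one, hV.ne'] using hK
  rcases eq_or_ne r ⊤ with rfl | hr_top
  · refine ⟨1, one_pos, fun {f s K V} _ _ _ _ hK => (laverage_le_essSup _).trans ?_⟩
    simpa [wnorm] using hK
  have hr' : 1 < r.toReal := by
    simpa using (ENNReal.toReal_lt_toReal one_ne_top hr_top).2 hr₁
  refine ⟨r.toReal / (r.toReal - 1), div_pos (by linarith) (by linarith),
    fun {f s K V} hf hK₀ hV hs hK => ?_⟩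
  rw [ENNReal.toReal_inv]
  simp only [wnorm, hr₁.ne', hr_top, if_false, iSup_le_iff] at hK
  exact setLAverage_le_of_weak_type (by fun_prop) (fun x => abs_nonneg _) hr' hK₀ hV hs hK

lemma exists_volume_ball_sqrt (N : ℕ) :
    ∃ ω > (0 : ℝ), ∀ {σ : ℝ}, 0 < σ → ∀ z : Euc N,
      volume (ball z √σ) = ENNReal.ofReal (ω * σ ^ ((N : ℝ) / 2)) := by
  refine ⟨volume.real (ball (0 : Euc N) 1),
    ENNReal.toReal_pos (Metric.measure_ball_pos _ _ one_pos).ne' measure_ball_lt_top.ne,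
    fun {σ} hσ z => ?_⟩
  rw [Measure.addHaar_ball_of_pos _ _ (Real.sqrt_pos.2 hσ), mul_comm (volume.real _),
    ENNReal.ofReal_mul (by positivity), ofReal_measureReal, finrank_euclideanSpace_fin,
    ← Real.rpow_natCast, Real.sqrt_eq_rpow, ← Real.rpow_mul hσ.le, one_div_mul_eq_div]

variable (N) in
lemma exists_ballAverage_le_of_ulocNorm_le (hr : 1 ≤ r) :
    ∃ C > (0 : ℝ), ∀ {f : Euc N → ℝ} {K ρ σ : ℝ}, Measurable f → 0 < K → 0 < σ → √σ ≤ ρ →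
      ulocNorm N r ρ f ≤ ENNReal.ofReal K → ∀ z,
      ballAverage √σ (fun x => ENNReal.ofReal |f x|) z ≤
        ENNReal.ofReal (C * K * σ ^ (-((N : ℝ) / 2 * r⁻¹.toReal))) := by
  obtain ⟨C, hC, average_le⟩ := exists_setLAverage_le_of_wnorm_le (N := N) hr
  obtain ⟨ω, hω, volume_ball⟩ := exists_volume_ball_sqrt N
  refine ⟨C * ω ^ (-r⁻¹.toReal), by positivity, fun {f K ρ σ} hf hK hσ hρ hfK z => ?_⟩
  refine (average_le hf hK (by positivity) (volume_ball hσ z)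
    ((wnorm_ball_le_ulocNorm f hρ z).trans hfK)).trans_eq ?_
  rw [Real.mul_rpow hω.le (by positivity), ← Real.rpow_mul hσ.le, mul_neg]
  congr 1
  ring

lemma hasSmallBallAverages_of_limsup_ulocNorm_eq_zero (hr : 1 ≤ r) {α T : ℝ}
    (hα : (N : ℝ) / 2 * r⁻¹.toReal ≤ α) {u : Euc N → ℝ → ℝ} (hu : ∀ t, Measurable fun x => u x t)
    (limsup_eq : limsup (fun t : ℝ =>
      ENNReal.ofReal ((T - t) ^ (α - (N : ℝ) / 2 * r⁻¹.toReal)) *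
        ulocNorm N r √(T - t) fun x => u x t) (𝓝[<] T) = 0) :
    HasSmallBallAverages 1 α T fun t x => ENNReal.ofReal |u x t| := by
  intro ε hε
  obtain ⟨C, hC, average_le⟩ := exists_ballAverage_le_of_ulocNorm_le N hr
  set a := (N : ℝ) / 2 * r⁻¹.toReal
  have small := eventually_lt_of_limsup_lt
    (limsup_eq.trans_lt (ENNReal.ofReal_pos.2 (div_pos hε hC)))
  filter_upwards [small] with s hs σ hσ hσT z
  rw [one_mul] at hσT
  have hP : 0 < σ ^ (α - a) := by positivity
  have norm_le : ulocNorm N r √(T - s) (fun x => u x s) ≤ ENNReal.ofReal (ε / C / σ ^ (α - a)) := by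
    rw [ENNReal.ofReal_div_of_pos hP, ENNReal.le_div_iff_mul_le (by simp [hP]) (by simp), mul_comm]
    refine le_trans ?_ hs.le
    gcongr
  refine (average_le (hu s) (by positivity) hσ (Real.sqrt_le_sqrt hσT) norm_le z).trans_eq ?_
  rw [← sub_add_cancel α a, neg_add, Real.rpow_add hσ, Real.rpow_neg hσ.le (α - a),
    add_sub_cancel_right]
  congr 1
  field_simp

end UniformlyLocal

section BlowupRate

open scoped Topology
open Set (Ioo)

variable {N : ℕ} {p q T : ℝ} {r : ℝ≥0∞} {u₀ v₀ : Euc N → ℝ} {u v : Euc N → ℝ → ℝ}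

lemma heatS_eq_heatFlow {t : ℝ} (ht : 0 < t) (φ : Euc N → ℝ) (x : Euc N) :
    heatS N t φ x = heatFlow t (fun y => ENNReal.ofReal (φ y)) x := by
  rw [heatS, heatFlow_apply]
  refine lintegral_congr fun y => ?_
  rw [heatKernel, finrank_euclideanSpace_fin, ENNReal.ofReal_mul (by positivity)]

lemma LocBdd.isLocallyEssBounded (hu : LocBdd N (ENNReal.ofReal T) u) :
    IsLocallyEssBounded T fun t x => ENNReal.ofReal (u x t) := by
  intro s t hs ht
  rcases lt_or_ge t s with hts | hst
  · exact ⟨0, by simp [Set.Icc_eq_empty_of_lt hts]⟩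
  obtain ⟨δ, hδ, hδ_lt⟩ := exists_between (lt_min hs (sub_pos.2 ht))
  obtain ⟨hδs, hδt⟩ := lt_min_iff.1 hδ_lt
  obtain ⟨M, hM⟩ := hu δ hδ ((ENNReal.ofReal_lt_ofReal_iff (by linarith)).2 (by linarith))
  refine ⟨M.toNNReal, fun τ hτ => ?_⟩
  filter_upwards [hM τ (by linarith [hτ.1])
    (ENNReal.ofReal_le_ofReal (by linarith [hτ.2]))] with x hx
  exact ENNReal.ofReal_le_ofReal ((le_abs_self _).trans hx)

lemma isMildHeatSolution_of_duhamel_heatS (hu₀ : Measurable u₀)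
    (hv : Measurable (Function.uncurry v)) (hv₀ : ∀ x t, 0 ≤ v x t) (hp : 0 ≤ p)
    (duhamel : ∀ t, 0 < t → t < T → ∀ᵐ x, ENNReal.ofReal (u x t) =
      heatS N t u₀ x + ∫⁻ s in Ioo 0 t, heatS N (t - s) (fun y => v y s ^ p) x) :
    IsMildHeatSolution T (fun t x => ENNReal.ofReal (u x t))
      (fun t x => ENNReal.ofReal (v x t) ^ p) := by
  have source_measurable :
      Measurable (Function.uncurry fun (t : ℝ) (x : Euc N) => ENNReal.ofReal (v x t) ^ p) :=
    (hv.comp measurable_swap).ennreal_ofReal.pow_const p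
  refine isMildHeatSolution_of_duhamel_zero hu₀.ennreal_ofReal source_measurable
    fun t ht htT => ?_
  filter_upwards [duhamel t ht htT] with x hx
  rw [hx, heatS_eq_heatFlow ht]
  congr 1
  refine setLIntegral_congr_fun measurableSet_Ioo fun s hs => ?_
  simp only [heatS_eq_heatFlow (sub_pos.2 hs.2), ENNReal.ofReal_rpow_of_nonneg (hv₀ _ _) hp]

lemma IsSolSys.symm {S : ℝ≥0∞} (h : IsSolSys N p q u₀ v₀ S u v) : IsSolSys N q p v₀ u₀ S v u := by
  obtain ⟨⟨hu_nonneg, hv_nonneg, hum, hvm, hub, hvb⟩, duhamel⟩ := h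
  exact ⟨⟨hv_nonneg, hu_nonneg, hvm, hum, hvb, hub⟩, fun t ht htT => (duhamel t ht htT).symm⟩

lemma IsSolSys.isMildHeatSolution (h : IsSolSys N p q u₀ v₀ (ENNReal.ofReal T) u v)
    (hu₀ : Measurable u₀) (hp : 0 ≤ p) (hT : 0 < T) :
    IsMildHeatSolution T (fun t x => ENNReal.ofReal (u x t))
      (fun t x => ENNReal.ofReal (v x t) ^ p) :=
  isMildHeatSolution_of_duhamel_heatS hu₀ h.1.2.2.2.1 h.1.2.1 hp
    fun t ht htT => (h.2 t ht ((ENNReal.ofReal_lt_ofReal_iff hT).2 htT)).1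

lemma mul_inv_toReal_le_of_ofReal_le {a A B : ℝ} (hA : 0 < A) (hB : 0 < B)
    (hr₁ : 1 ≤ r) (hr : ENNReal.ofReal (a * (B / A)) ≤ r) : a * r⁻¹.toReal ≤ A / B := by
  rcases eq_or_ne r ⊤ with rfl | hr_top
  · simpa using (by positivity : 0 ≤ A / B)
  have hr_pos : 0 < r.toReal := ENNReal.toReal_pos (one_pos.trans_le hr₁).ne' hr_top
  have hr' : a * (B / A) ≤ r.toReal := (ENNReal.ofReal_le_iff_le_toReal hr_top).1 hr
  rw [ENNReal.toReal_inv, ← div_eq_mul_inv, div_le_iff₀ hr_pos]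
  calc a = A / B * (a * (B / A)) := by field_simp
    _ ≤ A / B * r.toReal := by gcongr

theorem limsup_rpow_mul_ulocNorm_ne_zero (hp : 0 ≤ p) (hq : 0 ≤ q) (hpq : 1 < p * q)
    (hT : 0 < T) (hu₀ : Measurable u₀) (hv₀ : Measurable v₀)
    (hsol : IsSolSys N p q u₀ v₀ (ENNReal.ofReal T) u v)
    (hblow : limsup (fun t : ℝ => essSup (fun x => ENNReal.ofReal (u x t)) volume +
      essSup (fun x => ENNReal.ofReal (v x t)) volume) (𝓝[<] T) = ⊤)
    (hr : max 1 (ENNReal.ofReal ((N : ℝ) / 2 * ((p * q - 1) / (p + 1)))) ≤ r) :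
    limsup (fun t : ℝ =>
      ENNReal.ofReal ((T - t) ^ ((p + 1) / (p * q - 1) - (N : ℝ) / 2 * r⁻¹.toReal)) *
        ulocNorm N r √(T - t) fun x => u x t) (𝓝[<] T) ≠ 0 := by
  intro limsup_eq
  obtain ⟨one_le_r, critical_le_r⟩ := max_le_iff.1 hr
  have hp_pos : 0 < p := hp.lt_of_ne (by rintro rfl; linarith)
  have hpq' : 0 < p * q - 1 := sub_pos.2 hpq
  have source_exponent_u : p * ((q + 1) / (p * q - 1)) = (p + 1) / (p * q - 1) + 1 := by
    field_simp
    ring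
  have source_exponent_v : q * ((p + 1) / (p * q - 1)) = (q + 1) / (p * q - 1) + 1 := by
    rw [← mul_div_assoc, div_add_one hpq'.ne']
    ring
  have hu := hsol.isMildHeatSolution hu₀ hp hT
  have hv := hsol.symm.isMildHeatSolution hv₀ hq hT
  obtain ⟨⟨hu_nonneg, -, hum, hvm, hub, hvb⟩, -⟩ := hsol
  have u_averages := hasSmallBallAverages_of_limsup_ulocNorm_eq_zero one_le_r
    (mul_inv_toReal_le_of_ofReal_le (by positivity) hpq' one_le_r critical_le_r)
    (fun t => hum.of_uncurry_right) limsup_eq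
  simp only [abs_of_nonneg (hu_nonneg _ _)] at u_averages
  have v_averages := u_averages.of_rpow_source hp_pos source_exponent_u hT hu hv
  exact limsup_essSup_add_essSup_ne_top hp hq (by positivity) (by positivity) source_exponent_u
    source_exponent_v hT hu hv hub.isLocallyEssBounded hvb.isLocallyEssBounded
    ((u_averages.mono one_le_two).hasSmallHeatFlow fun t => hum.of_uncurry_right.ennreal_ofReal)
    (v_averages.hasSmallHeatFlow fun t => hvm.of_uncurry_right.ennreal_ofReal) hblow

theorem statement17_general (hp : 0 ≤ p) (hq : 0 ≤ q) (hpq : 1 < p * q) (hT : 0 < T)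
    (hu₀ : Measurable u₀) (hv₀ : Measurable v₀)
    (hsol : IsSolSys N p q u₀ v₀ (ENNReal.ofReal T) u v)
    (hblow : limsup (fun t : ℝ => essSup (fun x => ENNReal.ofReal (u x t)) volume +
      essSup (fun x => ENNReal.ofReal (v x t)) volume) (𝓝[<] T) = ⊤)
    {r₁ r₂ : ℝ≥0∞}
    (hr₁ : max 1 (ENNReal.ofReal ((N : ℝ) / 2 * ((p * q - 1) / (p + 1)))) ≤ r₁)
    (hr₂ : max 1 (ENNReal.ofReal ((N : ℝ) / 2 * ((p * q - 1) / (q + 1)))) ≤ r₂) :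
    ∃ c₂ : ℝ, 0 < c₂ ∧
      ENNReal.ofReal c₂ ≤ limsup (fun t : ℝ =>
        ENNReal.ofReal ((T - t) ^ ((p + 1) / (p * q - 1) - (N : ℝ) / 2 * r₁⁻¹.toReal)) *
          ulocNorm N r₁ √(T - t) fun x => u x t) (𝓝[<] T) ∧
      ENNReal.ofReal c₂ ≤ limsup (fun t : ℝ =>
        ENNReal.ofReal ((T - t) ^ ((q + 1) / (p * q - 1) - (N : ℝ) / 2 * r₂⁻¹.toReal)) *
          ulocNorm N r₂ √(T - t) fun x => v x t) (𝓝[<] T) := by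
  have hu := limsup_rpow_mul_ulocNorm_ne_zero hp hq hpq hT hu₀ hv₀ hsol hblow hr₁
  have hv := limsup_rpow_mul_ulocNorm_ne_zero (r := r₂) hq hp (mul_comm p q ▸ hpq) hT hv₀ hu₀
    hsol.symm (by simpa only [add_comm] using hblow) (by rwa [mul_comm q p])
  rw [mul_comm q p] at hv
  obtain ⟨c, -, hc⟩ := ENNReal.lt_iff_exists_real_btwn.1
    (lt_min (pos_iff_ne_zero.2 hu) (pos_iff_ne_zero.2 hv))
  exact ⟨c, ENNReal.ofReal_pos.1 hc.1, le_min_iff.1 hc.2.le⟩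

lemma max_one_ofReal_le_of_ofReal_mul_lt {l m m₀ : ℝ} (hl : 1 ≤ l) (hlm₀ : 1 ≤ l * m₀)
    (hm : m₀ ≤ m) (hr : ENNReal.ofReal (l * m) < r) : max 1 (ENNReal.ofReal m) ≤ r := by
  have hl₀ : 0 ≤ l := zero_le_one.trans hl
  have hlm : 1 ≤ l * m := hlm₀.trans (by gcongr)
  have hm_pos : 0 < m := pos_of_mul_pos_right (one_pos.trans_le hlm) hl₀
  refine (max_le (ENNReal.one_le_ofReal.2 hlm) ?_).trans hr.le
  exact ENNReal.ofReal_le_ofReal (le_mul_of_one_le_left hm_pos.le hl)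

end BlowupRate

/-- Theorem 3.3 (ii): lower `limsup` estimates of the blow-up rate of each
component of the minimal solution of the system (S) in uniformly local weak Lebesgue norms. -/
theorem statement17 (N : ℕ) (hN : 1 ≤ N) (p q : ℝ) (hp : 0 ≤ p) (hq : 0 ≤ q)
    (hpq : 1 < p * q) (r₁s r₂s : ℝ)
    (hr₁def : r₁s = (N : ℝ) / 2 * ((p * q - 1) / (p + 1)))
    (hr₂def : r₂s = (N : ℝ) / 2 * ((p * q - 1) / (q + 1)))
    (lstar : ℝ) (hl : 1 ≤ lstar) (hlmin : 1 ≤ lstar * min r₁s r₂s)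
    (T : ℝ) (hT : 0 < T) (u₀ v₀ : Euc N → ℝ)
    (hu₀m : Measurable u₀) (hv₀m : Measurable v₀)
    (hu₀ : ∀ x, 0 ≤ u₀ x) (hv₀ : ∀ x, 0 ≤ v₀ x)
    (u v : Euc N → ℝ → ℝ)
    (hmin : IsMinSolSys N p q u₀ v₀ (ENNReal.ofReal T) u v)
    (hblow : Filter.limsup (fun t : ℝ =>
        essSup (fun x => ENNReal.ofReal (u x t)) (volume : Measure (Euc N)) +
          essSup (fun x => ENNReal.ofReal (v x t)) (volume : Measure (Euc N)))
        (nhdsWithin T (Set.Iio T)) = ⊤) :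
    ∀ r₁ r₂ : ℝ≥0∞, ENNReal.ofReal (lstar * r₁s) < r₁ → ENNReal.ofReal (lstar * r₂s) < r₂ →
      ∃ c₂ : ℝ, 0 < c₂ ∧
        ENNReal.ofReal c₂ ≤ Filter.limsup (fun t : ℝ =>
          ENNReal.ofReal ((T - t) ^ ((p + 1) / (p * q - 1) - (N : ℝ) / 2 * r₁⁻¹.toReal)) *
            ulocNorm N r₁ (Real.sqrt (T - t)) (fun x => u x t))
          (nhdsWithin T (Set.Iio T)) ∧
        ENNReal.ofReal c₂ ≤ Filter.limsup (fun t : ℝ =>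
          ENNReal.ofReal ((T - t) ^ ((q + 1) / (p * q - 1) - (N : ℝ) / 2 * r₂⁻¹.toReal)) *
            ulocNorm N r₂ (Real.sqrt (T - t)) (fun x => v x t))
          (nhdsWithin T (Set.Iio T)) := by
  subst hr₁def hr₂def
  exact fun r₁ r₂ hr₁ hr₂ => statement17_general hp hq hpq hT hu₀m hv₀m hmin.1 hblow
    (max_one_ofReal_le_of_ofReal_mul_lt hl hlmin (min_le_left _ _) hr₁)
    (max_one_ofReal_le_of_ofReal_mul_lt hl hlmin (min_le_right _ _) hr₂)
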